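/- Let Ω be a countable type. Let π_1, …, π_M : Ω → ℝ be strictly positive with Σ_{x∈Ω} π_k(x) = 1 for each k, let w_1, …, w_M > 0 with Σ_k w_k = 1, and let π(x) = Σ_k w_k π_k(x). Let p : Ω → Ω → ℝ be a proposal kernel with p(x,y) ≥ 0 and Σ_y p(x,y) = 1 for each x. Then for every bounded function f : Ω → ℝ: (1/2) Σ_{x,y∈Ω} (f(x) − f(y))² · min( π(x) p(x,y), π(y) p(y,x) ) ≥ Σ_{k=1}^{M} w_k · (1/2) Σ_{x,y∈Ω} (f(x) − f(y))² · min( π_k(x) p(x,y), π_k(y) p(y,x) ), all sums converging absolutely. -/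

import Mathlib

/-! The flow `min (ρ x * p x y) (ρ y * p y x)` is positively homogeneous and superadditive in `ρ`,
so across every edge the mixture carries at least the weighted sum of the component flows; the
squared increments of `f` do not involve `ρ`. The energies are finite as soon as `f` is
square-summable against `ρ`: `(f x - f y) ^ 2 ≤ 2 * (f x ^ 2 + f y ^ 2)`, and `f x ^ 2`, `f y ^ 2`
can each be paired with the side of the minimum along which `p` is summed over a row. -/

theorem summable_mul_of_hasSum_row_one {α β : Type*} {g : α → ℝ} {p : α → β → ℝ}
    (hg : Summable g) (hp : ∀ x y, 0 ≤ p x y) (hpsum : ∀ x, HasSum (p x) 1) :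
    Summable fun e : α × β => g e.1 * p e.1 e.2 := by
  have row_tsum (x : α) : ∑' y, |g x| * p x y = |g x| := by
    rw [tsum_mul_left, (hpsum x).tsum_eq, mul_one]
  have abs_summable : Summable fun e : α × β => |g e.1| * p e.1 e.2 := by
    refine (summable_prod_of_nonneg fun e => mul_nonneg (abs_nonneg _) (hp _ _)).2
      ⟨fun x => (hpsum x).summable.mul_left |g x|, ?_⟩
    simpa only [row_tsum] using hg.abs
  refine Summable.of_abs (abs_summable.congr fun e => ?_)
  rw [abs_mul, abs_of_nonneg (hp _ _)]

theorem summable_sq_mul_of_abs_le {α : Type*} {ρ f : α → ℝ} {B : ℝ} (hρ : Summable ρ)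
    (hf : ∀ x, |f x| ≤ B) : Summable fun x => f x ^ 2 * ρ x := by
  refine (hρ.abs.mul_left (B ^ 2)).of_norm_bounded fun x => ?_
  rw [Real.norm_eq_abs, abs_mul, abs_pow]
  gcongr
  exact hf x

section

variable {Ω ι : Type*} {p : Ω → Ω → ℝ} {ρ f : Ω → ℝ}

/-- The equilibrium flow `ρ x * p x y * min 1 (ρ y * p y x / (ρ x * p x y))` from `x` to `y` of the
Metropolis–Hastings chain with target `ρ` and proposal `p`, in the form that needs no division. -/
def mhFlow (p : Ω → Ω → ℝ) (ρ : Ω → ℝ) (x y : Ω) : ℝ :=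
  min (ρ x * p x y) (ρ y * p y x)

/-- The contribution of a directed edge to the Metropolis–Hastings Dirichlet form of `f`, without
the factor `1 / 2`. It is a function of pairs, so that its summability is absolute convergence of
the double sum. -/
def mhEdgeEnergy (p : Ω → Ω → ℝ) (ρ f : Ω → ℝ) (e : Ω × Ω) : ℝ :=
  (f e.1 - f e.2) ^ 2 * mhFlow p ρ e.1 e.2

/-- The Metropolis–Hastings Dirichlet form `𝓔_ρ(f, f)` with target `ρ` and proposal `p`, as an
iterated sum; it is meaningful when `mhEdgeEnergy p ρ f` is summable. -/
noncomputable def mhDirichletForm (p : Ω → Ω → ℝ) (ρ f : Ω → ℝ) : ℝ :=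
  (1 / 2) * ∑' x, ∑' y, mhEdgeEnergy p ρ f (x, y)

theorem mhFlow_nonneg (hp : ∀ x y, 0 ≤ p x y) (hρ : ∀ x, 0 ≤ ρ x) (x y : Ω) :
    0 ≤ mhFlow p ρ x y :=
  le_min (mul_nonneg (hρ x) (hp x y)) (mul_nonneg (hρ y) (hp y x))

theorem mhEdgeEnergy_nonneg (hp : ∀ x y, 0 ≤ p x y) (hρ : ∀ x, 0 ≤ ρ x) (e : Ω × Ω) :
    0 ≤ mhEdgeEnergy p ρ f e :=
  mul_nonneg (sq_nonneg _) (mhFlow_nonneg hp hρ _ _)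

theorem mhEdgeEnergy_le (hp : ∀ x y, 0 ≤ p x y) (hρ : ∀ x, 0 ≤ ρ x) (x y : Ω) :
    mhEdgeEnergy p ρ f (x, y) ≤
      2 * (f x ^ 2 * ρ x * p x y + f y ^ 2 * ρ y * p y x) := by
  have increment_sq_le : (f x - f y) ^ 2 ≤ 2 * (f x ^ 2 + f y ^ 2) := by
    linarith [sq_nonneg (f x + f y)]
  calc (f x - f y) ^ 2 * mhFlow p ρ x y
      ≤ 2 * (f x ^ 2 + f y ^ 2) * mhFlow p ρ x y :=
        mul_le_mul_of_nonneg_right increment_sq_le (mhFlow_nonneg hp hρ x y)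
    _ = 2 * (f x ^ 2 * mhFlow p ρ x y + f y ^ 2 * mhFlow p ρ x y) := by ring
    _ ≤ 2 * (f x ^ 2 * (ρ x * p x y) + f y ^ 2 * (ρ y * p y x)) := by
        gcongr
        · exact min_le_left _ _
        · exact min_le_right _ _
    _ = 2 * (f x ^ 2 * ρ x * p x y + f y ^ 2 * ρ y * p y x) := by ring

theorem summable_mhEdgeEnergy (hp : ∀ x y, 0 ≤ p x y) (hpsum : ∀ x, HasSum (p x) 1)
    (hρ : ∀ x, 0 ≤ ρ x) (hf : Summable fun x => f x ^ 2 * ρ x) :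
    Summable (mhEdgeEnergy p ρ f) := by
  have outgoing : Summable fun e : Ω × Ω => f e.1 ^ 2 * ρ e.1 * p e.1 e.2 :=
    summable_mul_of_hasSum_row_one hf hp hpsum
  have incoming : Summable fun e : Ω × Ω => f e.2 ^ 2 * ρ e.2 * p e.2 e.1 :=
    outgoing.prod_symm
  exact ((outgoing.add incoming).mul_left 2).of_nonneg_of_le (mhEdgeEnergy_nonneg hp hρ)
    fun e => mhEdgeEnergy_le hp hρ e.1 e.2

theorem mhDirichletForm_eq_tsum (h : Summable (mhEdgeEnergy p ρ f)) :
    mhDirichletForm p ρ f = (1 / 2) * ∑' e, mhEdgeEnergy p ρ f e := by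
  rw [mhDirichletForm, h.tsum_prod]

variable [Fintype ι] {w : ι → ℝ} {π : ι → Ω → ℝ}

theorem sum_mul_mhFlow_le (hw : ∀ k, 0 ≤ w k) (x y : Ω) :
    ∑ k, w k * mhFlow p (π k) x y ≤ mhFlow p (fun z => ∑ k, w k * π k z) x y := by
  simp only [mhFlow, Finset.sum_mul, mul_assoc]
  refine le_min (Finset.sum_le_sum fun k _ => ?_) (Finset.sum_le_sum fun k _ => ?_)
  · exact mul_le_mul_of_nonneg_left (min_le_left _ _) (hw k)
  · exact mul_le_mul_of_nonneg_left (min_le_right _ _) (hw k)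

theorem sum_mul_mhEdgeEnergy_le (hw : ∀ k, 0 ≤ w k) (e : Ω × Ω) :
    ∑ k, w k * mhEdgeEnergy p (π k) f e ≤
      mhEdgeEnergy p (fun z => ∑ k, w k * π k z) f e := by
  simp only [mhEdgeEnergy, mul_left_comm (w _), ← Finset.mul_sum]
  exact mul_le_mul_of_nonneg_left (sum_mul_mhFlow_le hw e.1 e.2) (sq_nonneg _)

theorem sum_mul_mhDirichletForm_le (hw : ∀ k, 0 ≤ w k)
    (hcomp : ∀ k, Summable (mhEdgeEnergy p (π k) f))
    (hmix : Summable (mhEdgeEnergy p (fun z => ∑ k, w k * π k z) f)) :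
    ∑ k, w k * mhDirichletForm p (π k) f ≤
      mhDirichletForm p (fun z => ∑ k, w k * π k z) f := by
  have hweighted (k : ι) : Summable fun e => w k * mhEdgeEnergy p (π k) f e :=
    (hcomp k).mul_left (w k)
  calc ∑ k, w k * mhDirichletForm p (π k) f
      = (1 / 2) * ∑ k, ∑' e, w k * mhEdgeEnergy p (π k) f e := by
        simp only [mhDirichletForm_eq_tsum (hcomp _), mul_left_comm (w _), tsum_mul_left,
          Finset.mul_sum]
    _ = (1 / 2) * ∑' e, ∑ k, w k * mhEdgeEnergy p (π k) f e := by
        rw [Summable.tsum_finsetSum fun k _ => hweighted k]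
    _ ≤ (1 / 2) * ∑' e, mhEdgeEnergy p (fun z => ∑ k, w k * π k z) f e := by
        gcongr
        · exact summable_sum fun k _ => hweighted k
        · exact sum_mul_mhEdgeEnergy_le hw _
    _ = mhDirichletForm p (fun z => ∑ k, w k * π k z) f :=
        (mhDirichletForm_eq_tsum hmix).symm

end

theorem stmt_14_general {Ω ι : Type*} [Fintype ι] {π : ι → Ω → ℝ} {w : ι → ℝ}
    {p : Ω → Ω → ℝ} {f : Ω → ℝ} (hπ : ∀ k x, 0 ≤ π k x)
    (hw : ∀ k, 0 ≤ w k) (hp : ∀ x y, 0 ≤ p x y) (hpsum : ∀ x, HasSum (p x) 1)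
    (hf : ∀ k, Summable fun x => f x ^ 2 * π k x) :
    Summable (mhEdgeEnergy p (fun x => ∑ k, w k * π k x) f) ∧
      (∀ k, Summable (mhEdgeEnergy p (π k) f)) ∧
      ∑ k, w k * mhDirichletForm p (π k) f ≤
        mhDirichletForm p (fun x => ∑ k, w k * π k x) f := by
  have mixture_nonneg (x : Ω) : 0 ≤ ∑ k, w k * π k x :=
    Finset.sum_nonneg fun k _ => mul_nonneg (hw k) (hπ k x)
  have mixture_sq_summable : Summable fun x => f x ^ 2 * ∑ k, w k * π k x := by
    simp only [Finset.mul_sum, mul_left_comm _ (w _)]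
    exact summable_sum fun k _ => (hf k).mul_left (w k)
  have hmix := summable_mhEdgeEnergy hp hpsum mixture_nonneg mixture_sq_summable
  have hcomp (k : ι) := summable_mhEdgeEnergy hp hpsum (hπ k) (hf k)
  exact ⟨hmix, hcomp, sum_mul_mhDirichletForm_le hw hcomp hmix⟩

theorem stmt_14 {Ω : Type*} [Countable Ω] (M : ℕ)
    (π : Fin M → Ω → ℝ) (hπpos : ∀ k x, 0 < π k x) (hπsum : ∀ k, HasSum (π k) 1)
    (w : Fin M → ℝ) (hw : ∀ k, 0 < w k) (hwsum : ∑ k, w k = 1)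
    (πm : Ω → ℝ) (hπm : ∀ x, πm x = ∑ k, w k * π k x)
    (p : Ω → Ω → ℝ) (hp : ∀ x y, 0 ≤ p x y) (hpsum : ∀ x, HasSum (p x) 1) :
    ∀ f : Ω → ℝ, (∃ B : ℝ, ∀ x, |f x| ≤ B) →
      (Summable fun q : Ω × Ω =>
        (f q.1 - f q.2) ^ 2 * min (πm q.1 * p q.1 q.2) (πm q.2 * p q.2 q.1)) ∧
      (∀ k, Summable fun q : Ω × Ω =>
        (f q.1 - f q.2) ^ 2 * min (π k q.1 * p q.1 q.2) (π k q.2 * p q.2 q.1)) ∧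
      ∑ k, w k * ((1 / 2) * ∑' x, ∑' y,
          (f x - f y) ^ 2 * min (π k x * p x y) (π k y * p y x))
        ≤ (1 / 2) * ∑' x, ∑' y,
            (f x - f y) ^ 2 * min (πm x * p x y) (πm y * p y x) := by
  rintro f ⟨B, hB⟩
  obtain rfl : πm = fun x => ∑ k, w k * π k x := funext hπm
  exact stmt_14_general (fun k x => (hπpos k x).le) (fun k => (hw k).le) hp hpsum
    fun k => summable_sq_mul_of_abs_le (hπsum k).summable hB
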